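/- Let x : ℕ × ℕ → ℝ^k be a bounded double sequence (∃ C, ∀ p, ‖x p‖ ≤ C). Then the P-core of x equals the convex hull of the set of Pringsheim cluster points of x: ⋂_{E ∈ atTop ×ˢ atTop} closedConvexHull ℝ (x '' E) = convexHull ℝ {ℓ : MapClusterPt ℓ (atTop ×ˢ atTop) x}. -/

import Mathlib

open Filter Topology

theorem aux_isCompact_convexHull {k : ℕ} {s : Set (EuclideanSpace ℝ (Fin k))}
    (hs : IsCompact s) : IsCompact (convexHull ℝ s) := by
  have key : convexHull ℝ s = ⋃ n ∈ Set.Iic (k + 1),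
      (fun q : (Fin n → ℝ) × (Fin n → EuclideanSpace ℝ (Fin k)) => ∑ i, q.1 i • q.2 i) ''
        (stdSimplex ℝ (Fin n) ×ˢ Set.univ.pi fun _ => s) := by
    apply Set.Subset.antisymm
    · intro y hy
      obtain ⟨ι, hι, z, w, hz, hA, hw, hw1, hy⟩ := eq_pos_convex_span_of_mem_convexHull hy
      have hc : Fintype.card ι ≤ k + 1 := by
        have h1 := hA.card_le_finrank_succ
        have h2 := Submodule.finrank_le (vectorSpan ℝ (Set.range z))
        rw [finrank_euclideanSpace_fin] at h2
        omega
      refine Set.mem_biUnion (x := Fintype.card ι) hc ?_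
      let e := (Fintype.equivFin ι).symm
      refine ⟨(w ∘ e, z ∘ e), ⟨⟨fun i => (hw _).le, ?_⟩, fun i _ => hz ⟨_, rfl⟩⟩, ?_⟩
      · rw [← hw1]
        exact e.sum_comp w
      · rw [← hy]
        exact e.sum_comp fun i => w i • z i
    · intro y hy
      simp only [Set.mem_iUnion] at hy
      obtain ⟨n, _, ⟨w, z⟩, ⟨hw, hz⟩, rfl⟩ := hy
      exact (convex_convexHull ℝ s).sum_mem (fun i _ => hw.1 i) hw.2
        (fun i _ => subset_convexHull ℝ s (hz i trivial))
  rw [key]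
  refine (Set.finite_Iic _).isCompact_biUnion fun n _ => ?_
  refine ((isCompact_stdSimplex ℝ (Fin n)).prod (isCompact_univ_pi fun _ => hs)).image ?_
  fun_prop

/-- Proposition 4.3: the P-core of a bounded double sequence with values in `ℝ^k` equals
the convex hull of its set of Pringsheim cluster points. The Pringsheim ideal is
represented by its dual filter `atTop ×ˢ atTop` on `ℕ × ℕ`. -/
theorem pcore_eq_convexHull_pringsheim_clusterPts
    {k : ℕ} (x : ℕ × ℕ → EuclideanSpace ℝ (Fin k))
    (hx : ∃ C : ℝ, ∀ p : ℕ × ℕ, ‖x p‖ ≤ C) :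
    ⋂ E ∈ (atTop ×ˢ atTop : Filter (ℕ × ℕ)), closedConvexHull ℝ (x '' E) =
      convexHull ℝ
        {ℓ : EuclideanSpace ℝ (Fin k) | MapClusterPt ℓ (atTop ×ˢ atTop : Filter (ℕ × ℕ)) x} := by
  obtain ⟨C, hC⟩ := hx
  generalize (atTop ×ˢ atTop : Filter (ℕ × ℕ)) = F
  have hB : IsCompact (Metric.closedBall (0 : EuclideanSpace ℝ (Fin k)) C) :=
    isCompact_closedBall _ _
  have hmem : ∀ p, x p ∈ Metric.closedBall (0 : EuclideanSpace ℝ (Fin k)) C := by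
    intro p; simpa using hC p
  have hle : map x F ≤ 𝓟 (Metric.closedBall (0 : EuclideanSpace ℝ (Fin k)) C) :=
    le_principal_iff.2 (mem_map.2 (univ_mem' hmem))
  have hK : IsCompact {ℓ | MapClusterPt ℓ F x} := by
    refine hB.of_isClosed_subset isClosed_setOfPred_clusterPt ?_
    intro ℓ hℓ
    have h := ClusterPt.mono hℓ hle
    rwa [← mem_closure_iff_clusterPt, Metric.isClosed_closedBall.closure_eq] at h
  apply Set.Subset.antisymm
  · intro y hy
    by_contra hn
    obtain ⟨f, u, hu, huy⟩ := geometric_hahn_banach_closed_point (convex_convexHull ℝ _)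
      (aux_isCompact_convexHull hK).isClosed hn
    have hopen : IsOpen {a | f a < u} := isOpen_lt f.continuous continuous_const
    have hE : {a | f a < u} ∈ map x F :=
      hB.adherence_nhdset hle hopen fun a _ ha => hu a (subset_convexHull ℝ _ ha)
    have hy' := Set.mem_iInter₂.1 hy _ (mem_map.1 hE)
    have hsub : closedConvexHull ℝ (x '' (x ⁻¹' {a | f a < u})) ⊆ {a | f a ≤ u} := by
      apply closedConvexHull_min
      · rintro _ ⟨p, hp, rfl⟩
        have hp1 : f (x p) < u := hp
        exact hp1.le
      · exact convex_halfSpace_le f.toLinearMap.isLinear u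
      · exact isClosed_le f.continuous continuous_const
    exact absurd (hsub hy') (not_le.2 huy)
  · refine Set.subset_iInter₂ fun E hE => convexHull_min ?_ convex_closedConvexHull
    intro ℓ hℓ
    apply closure_subset_closedConvexHull
    exact mem_closure_iff_clusterPt.2
      (ClusterPt.mono hℓ (le_principal_iff.2 (image_mem_map hE)))
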